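/- Let n ≥ 1 and let Φ_n : ℂ^n → ℂ^n be the map Φ_n(ζ_1, …, ζ_n) = ( x_1^{(n)}(ζ_1, …, ζ_n), …, x_n^{(n)}(ζ_1, …, ζ_n) ). Then the pushforward under Φ_n of the measure on ℂ^n with density ζ ↦ ∏_{j=1}^{n} (1 + |ζ_j|²)^{2(j−1)} with respect to Lebesgue measure λ equals Lebesgue measure λ; equivalently, for every nonnegative measurable f : ℂ^n → [0,∞], ∫_{ℂ^n} f(x) dλ(x) = ∫_{ℂ^n} f(Φ_n(ζ)) ∏_{j=1}^{n} (1 + |ζ_j|²)^{2(j−1)} dλ(ζ). -/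

import Mathlib

open MeasureTheory

/-- The singular part `(f)₋` of a Laurent series: the sum of its strictly
negative-degree terms. -/
noncomputable def singPart (f : LaurentSeries ℂ) : LaurentSeries ℂ where
  coeff k := if k < 0 then f.coeff k else 0
  isPWO_support' := by
    apply f.isPWO_support'.mono
    intro k hk
    simp only [Function.mem_support] at hk ⊢
    by_cases h : k < 0
    · simpa [h] using hk
    · simp [h] at hk

/-- The recursively defined Laurent polynomials `x⁽ᵏ⁾(ζ₁, …, ζ_k)`:
`x⁽¹⁾ = ζ₁ z⁻¹` and
`x⁽ᵏ⁺¹⁾ = ((1+|ζ_{k+1}|²) Σ_{p=0}^k conj(ζ_{k+1})^p (x⁽ᵏ⁾)^{p+1} z^{p(k+1)})₋ + ζ_{k+1} z^{−k−1}`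
(`ζ` is indexed starting at `1`; the base case is subsumed via `x⁽⁰⁾ = 0`). -/
noncomputable def xrec (ζ : ℕ → ℂ) : ℕ → LaurentSeries ℂ
  | 0 => 0
  | m + 1 =>
      singPart (HahnSeries.single (0 : ℤ) (((1 + ‖ζ (m + 1)‖ ^ 2 : ℝ) : ℂ)) *
          ∑ p ∈ Finset.range (m + 1),
            HahnSeries.single (0 : ℤ) ((starRingEnd ℂ (ζ (m + 1))) ^ p) *
              xrec ζ m ^ (p + 1) * HahnSeries.single ((p : ℤ) * ((m : ℤ) + 1)) 1)
        + HahnSeries.single (-(m : ℤ) - 1) (ζ (m + 1))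

/-- The map `Φ_n : ℂⁿ → ℂⁿ`, `Φ_n(ζ₁, …, ζ_n) = (x₁⁽ⁿ⁾(ζ), …, x_n⁽ⁿ⁾(ζ))`, where
`x_j⁽ⁿ⁾` is the coefficient of `z^{-j}` in `x⁽ⁿ⁾`. -/
noncomputable def Phi (n : ℕ) (ζ : Fin n → ℂ) : Fin n → ℂ :=
  fun j =>
    (xrec (fun i => if h : i - 1 < n ∧ 1 ≤ i then ζ ⟨i - 1, h.1⟩ else 0) n).coeff
      (-((j : ℕ) : ℤ) - 1)

/-- All coefficients below `d` vanish. -/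
def LB (d : ℤ) (f : LaurentSeries ℂ) : Prop := ∀ k < d, f.coeff k = 0

lemma LB.mul {a b : ℤ} {f g : LaurentSeries ℂ} (hf : LB a f) (hg : LB b g) :
    LB (a + b) (f * g) := by
  intro k hk
  rw [HahnSeries.coeff_mul]
  apply Finset.sum_eq_zero
  intro ij hij
  have h : ij.1 + ij.2 = k := by
    simpa using (Finset.mem_antidiagonal.1 hij).2.2
  by_cases h1 : ij.1 < a
  · rw [hf _ h1, zero_mul]
  · rw [hg _ (by omega), mul_zero]

lemma LB.mono {a b : ℤ} {f : LaurentSeries ℂ} (hf : LB a f) (h : b ≤ a) : LB b f :=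
  fun k hk => hf k (by omega)

lemma LB.pow {m : ℤ} {f : LaurentSeries ℂ} (hf : LB (-m) f) (p : ℕ) :
    LB (-(p + 1) * m) (f ^ (p + 1)) := by
  induction p with
  | zero => simpa using hf
  | succ p ih =>
    rw [pow_succ]
    exact (ih.mul hf).mono (by push_cast; apply le_of_eq; ring)

lemma LB.add {d : ℤ} {f g : LaurentSeries ℂ} (hf : LB d f) (hg : LB d g) : LB d (f + g) := by
  intro k hk
  rw [HahnSeries.coeff_add, hf k hk, hg k hk, add_zero]

lemma LB.pow_sub_pow {m d : ℤ} {f g : LaurentSeries ℂ} (hf : LB (-m) f) (hg : LB (-m) g)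
    (h : LB d (f - g)) (p : ℕ) : LB (d - p * m) (f ^ (p + 1) - g ^ (p + 1)) := by
  induction p with
  | zero => simpa using h
  | succ p ih =>
    have e : f ^ (p + 1 + 1) - g ^ (p + 1 + 1)
        = f * (f ^ (p + 1) - g ^ (p + 1)) + (f - g) * g ^ (p + 1) := by ring
    rw [e]
    refine LB.add ((hf.mul ih).mono ?_) ((h.mul (hg.pow p)).mono ?_)
    · push_cast; apply le_of_eq; ring
    · push_cast; apply le_of_eq; ring

lemma coeff_mul_Icc {a b : ℤ} {f g : LaurentSeries ℂ} (hf : LB a f) (hg : LB b g) (k : ℤ) :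
    (f * g).coeff k = ∑ i ∈ Finset.Icc a (k - b), f.coeff i * g.coeff (k - i) := by
  rw [HahnSeries.coeff_mul]
  refine Finset.sum_of_injOn (fun ij => ij.1) ?_ ?_ ?_ ?_
  · intro x hx y hy hxy
    have h1 : x.1 + x.2 = k := by simpa using (Finset.mem_antidiagonal.1 hx).2.2
    have h2 : y.1 + y.2 = k := by simpa using (Finset.mem_antidiagonal.1 hy).2.2
    simp only at hxy
    ext
    · exact hxy
    · omega
  · intro x hx
    obtain ⟨h1, h2, h3⟩ := Finset.mem_antidiagonal.1 hx
    have h1' : a ≤ x.1 := by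
      by_contra hc
      exact h1 (hf _ (by omega))
    have h2' : b ≤ x.2 := by
      by_contra hc
      exact h2 (hg _ (by omega))
    simp only [Finset.coe_Icc, Set.mem_Icc]
    omega
  · intro i hi hni
    by_contra hc
    apply hni
    refine ⟨(i, k - i), ?_, rfl⟩
    refine Finset.mem_antidiagonal.2 ⟨left_ne_zero_of_mul hc, right_ne_zero_of_mul hc, ?_⟩
    simp
  · intro x hx
    have h1 : x.1 + x.2 = k := by simpa using (Finset.mem_antidiagonal.1 hx).2.2
    rw [← h1]; simp

/-- Measurable families of Laurent series with uniformly bounded poles. -/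
def MF {α : Type*} [MeasurableSpace α] (F : α → LaurentSeries ℂ) : Prop :=
  (∃ d, ∀ a, LB d (F a)) ∧ ∀ k, Measurable fun a => (F a).coeff k

lemma MF.mul {α : Type*} [MeasurableSpace α] {F G : α → LaurentSeries ℂ} (hF : MF F) (hG : MF G) :
    MF (fun a => F a * G a) := by
  obtain ⟨⟨d, hd⟩, hF⟩ := hF
  obtain ⟨⟨e, he⟩, hG⟩ := hG
  refine ⟨⟨d + e, fun a => (hd a).mul (he a)⟩, fun k => ?_⟩
  simp_rw [fun a => coeff_mul_Icc (hd a) (he a) k]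
  exact Finset.measurable_fun_sum _ fun i _ => (hF i).mul (hG _)

lemma MF.pow {α : Type*} [MeasurableSpace α] {F : α → LaurentSeries ℂ} (hF : MF F) (p : ℕ) :
    MF (fun a => F a ^ (p + 1)) := by
  induction p with
  | zero => simpa using hF
  | succ p ih =>
    simp_rw [pow_succ _ (p + 1)]
    exact ih.mul hF

/-- One recursion step. -/
noncomputable def stepS (m : ℕ) (z : ℂ) (x : LaurentSeries ℂ) : LaurentSeries ℂ :=
  singPart (HahnSeries.single (0 : ℤ) (((1 + ‖z‖ ^ 2 : ℝ) : ℂ)) *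
          ∑ p ∈ Finset.range (m + 1),
            HahnSeries.single (0 : ℤ) ((starRingEnd ℂ z) ^ p) *
              x ^ (p + 1) * HahnSeries.single ((p : ℤ) * ((m : ℤ) + 1)) 1)
        + HahnSeries.single (-(m : ℤ) - 1) z

lemma xrec_succ (ζ : ℕ → ℂ) (m : ℕ) : xrec ζ (m + 1) = stepS m (ζ (m + 1)) (xrec ζ m) := rfl

lemma stepS_coeff (m : ℕ) (z : ℂ) (x : LaurentSeries ℂ) (k : ℤ) :
    (stepS m z x).coeff k =
      (if k < 0 then ((1 + ‖z‖ ^ 2 : ℝ) : ℂ) * ∑ p ∈ Finset.range (m + 1),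
        (starRingEnd ℂ z) ^ p * (x ^ (p + 1)).coeff (k - p * (m + 1)) else 0)
      + if k = -(m : ℤ) - 1 then z else 0 := by
  unfold stepS
  rw [HahnSeries.coeff_add]
  congr 1
  · simp only [singPart]
    split_ifs with h
    · rw [HahnSeries.coeff_single_zero_mul, HahnSeries.coeff_sum]
      congr 1
      apply Finset.sum_congr rfl
      intro p _
      rw [HahnSeries.coeff_mul_single, mul_one, HahnSeries.coeff_single_zero_mul]
    · rfl
  · rw [HahnSeries.coeff_single]
    simp

lemma stepS_nonneg (m : ℕ) (z : ℂ) (x : LaurentSeries ℂ) (k : ℤ) (hk : 0 ≤ k) :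
    (stepS m z x).coeff k = 0 := by
  rw [stepS_coeff, if_neg (by omega), if_neg (by omega), add_zero]

lemma stepS_low (m : ℕ) (z : ℂ) (x : LaurentSeries ℂ) (hx : LB (-m) x) (k : ℤ) (hk : k < -m) :
    (stepS m z x).coeff k = if k = -(m : ℤ) - 1 then z else 0 := by
  rw [stepS_coeff, Finset.sum_eq_zero]
  · simp
  · intro p _
    rw [hx.pow p, mul_zero]
    have : (-((p : ℤ) + 1) * m) = - m - p * m := by ring
    have h2 : k - (p : ℤ) * (m + 1) = k - p * m - p := by ring
    rw [this, h2]
    have : (0 : ℤ) ≤ p := by positivity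
    omega

lemma stepS_LB (m : ℕ) (z : ℂ) (x : LaurentSeries ℂ) (hx : LB (-m) x) :
    LB (-((m + 1 : ℕ) : ℤ)) (stepS m z x) := by
  intro k hk
  push_cast at hk
  rw [stepS_low m z x hx k (by omega), if_neg (by omega)]

lemma stepS_sub (m : ℕ) (z : ℂ) (x y : LaurentSeries ℂ) (hx : LB (-m) x) (hy : LB (-m) y)
    (j : ℕ) (hj : j < m) (h : LB (-j - 1) (x - y)) :
    (stepS m z x).coeff (-j - 1) - (stepS m z y).coeff (-j - 1)
      = ((1 + ‖z‖ ^ 2 : ℝ) : ℂ) * (x.coeff (-j - 1) - y.coeff (-j - 1)) := by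
  have c1 : (-(j : ℤ) - 1 < 0) := by omega
  have c2 : ¬ (-(j : ℤ) - 1 = -(m : ℤ) - 1) := by omega
  rw [stepS_coeff, stepS_coeff, if_neg c2, if_pos c1, if_pos c1,
    add_zero, add_zero, ← mul_sub, ← Finset.sum_sub_distrib, Finset.sum_range_succ']
  rw [Finset.sum_eq_zero]
  · simp
  · intro p _
    rw [← mul_sub, ← HahnSeries.coeff_sub, hx.pow_sub_pow hy h (p + 1), mul_zero]
    push_cast
    have : (0 : ℤ) ≤ p := by positivity
    linarith

lemma xrec_nonneg (ζ : ℕ → ℂ) (m : ℕ) (k : ℤ) (hk : 0 ≤ k) : (xrec ζ m).coeff k = 0 := by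
  cases m with
  | zero => simp [xrec]
  | succ m => rw [xrec_succ, stepS_nonneg _ _ _ _ hk]

lemma xrec_LB (ζ : ℕ → ℂ) (m : ℕ) : LB (-m) (xrec ζ m) := by
  induction m with
  | zero => intro k _; simp [xrec]
  | succ m ih => rw [xrec_succ]; exact stepS_LB _ _ _ ih

lemma xrec_congr (ζ ξ : ℕ → ℂ) (m : ℕ) (h : ∀ i, 1 ≤ i → i ≤ m → ζ i = ξ i) :
    xrec ζ m = xrec ξ m := by
  induction m with
  | zero => rfl
  | succ m ih =>
    rw [xrec_succ, xrec_succ, ih (fun i h1 h2 => h i h1 (by omega)), h (m + 1) (by omega) le_rfl]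

/-- The Laurent polynomial with prescribed coefficients. -/
noncomputable def toL (m : ℕ) (x : Fin m → ℂ) : LaurentSeries ℂ :=
  ∑ i : Fin m, HahnSeries.single (-((i : ℕ) : ℤ) - 1) (x i)

lemma toL_coeff (m : ℕ) (x : Fin m → ℂ) (k : ℤ) :
    (toL m x).coeff k = ∑ i : Fin m, if k = -((i : ℕ) : ℤ) - 1 then x i else 0 := by
  unfold toL
  rw [HahnSeries.coeff_sum]
  apply Finset.sum_congr rfl
  intro i _
  rw [HahnSeries.coeff_single]
  simp

lemma toL_coeff_fin (m : ℕ) (x : Fin m → ℂ) (j : Fin m) :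
    (toL m x).coeff (-((j : ℕ) : ℤ) - 1) = x j := by
  rw [toL_coeff, Finset.sum_eq_single j]
  · simp
  · intro i _ hij
    rw [if_neg]
    intro h
    apply hij
    ext
    omega
  · simp

lemma toL_LB (m : ℕ) (x : Fin m → ℂ) : LB (-m) (toL m x) := by
  intro k hk
  rw [toL_coeff]
  apply Finset.sum_eq_zero
  intro i _
  rw [if_neg]
  omega

lemma toL_MF (m : ℕ) : MF (toL m) := by
  refine ⟨⟨-m, toL_LB m⟩, fun k => ?_⟩
  simp_rw [toL_coeff]
  refine Finset.measurable_fun_sum _ fun i _ => ?_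
  split_ifs <;> fun_prop

lemma eq_toL (m : ℕ) (f : LaurentSeries ℂ) (h1 : LB (-m) f) (h2 : ∀ k, 0 ≤ k → f.coeff k = 0) :
    f = toL m (fun j => f.coeff (-((j : ℕ) : ℤ) - 1)) := by
  ext k
  by_cases hk : k < -m
  · rw [h1 k hk, toL_LB m _ k hk]
  · by_cases hk2 : 0 ≤ k
    · rw [h2 k hk2, toL_coeff, Finset.sum_eq_zero]
      intro i _
      rw [if_neg]
      omega
    · obtain ⟨j, hj⟩ : ∃ j : Fin m, k = -((j : ℕ) : ℤ) - 1 :=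
        ⟨⟨(-k - 1).toNat, by omega⟩, by simp; omega⟩
      rw [hj, toL_coeff_fin]

/-- The step map in coordinates. -/
noncomputable def stepT (m : ℕ) (z : ℂ) (x : Fin m → ℂ) : Fin m → ℂ :=
  fun j => (stepS m z (toL m x)).coeff (-((j : ℕ) : ℤ) - 1)

lemma stepT_measurable (m : ℕ) : Measurable fun p : ℂ × (Fin m → ℂ) => stepT m p.1 p.2 := by
  refine measurable_pi_iff.2 fun j => ?_
  simp only [stepT, stepS_coeff]
  have c1 : (-((j : ℕ) : ℤ) - 1 < 0) := by omega
  have c2 : ¬ (-((j : ℕ) : ℤ) - 1 = -(m : ℤ) - 1) := by omega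
  simp only [c1, c2, if_true, if_false, add_zero]
  refine Measurable.mul (by fun_prop) (Finset.measurable_fun_sum _ fun p _ => ?_)
  refine Measurable.mul ?_ ?_
  · have : Measurable (starRingEnd ℂ) := Complex.continuous_conj.measurable
    fun_prop
  · exact (((toL_MF m).pow p).2 _).comp measurable_snd

lemma stepT_measurable_right (m : ℕ) (z : ℂ) : Measurable (stepT m z) :=
  Measurable.of_uncurry_left (f := stepT m) (x := z) (stepT_measurable m)

lemma phi_snoc (m : ℕ) (z : ℂ) (ζ : Fin m → ℂ) :
    Phi (m + 1) (Fin.snoc (α := fun _ => ℂ) ζ z)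
      = Fin.snoc (α := fun _ => ℂ) (stepT m z (Phi m ζ)) z := by
  set ξ : ℕ → ℂ := (fun i => if h : i - 1 < m + 1 ∧ 1 ≤ i then
    (Fin.snoc (α := fun _ => ℂ) ζ z : Fin (m + 1) → ℂ) ⟨i - 1, h.1⟩ else 0) with hξ
  have hz : ξ (m + 1) = z := by
    have : (⟨m, by omega⟩ : Fin (m + 1)) = Fin.last m := rfl
    simp [hξ, this]
  have hx : xrec ξ m = toL m (Phi m ζ) := by
    have : xrec ξ m = xrec (fun i => if h : i - 1 < m ∧ 1 ≤ i then ζ ⟨i - 1, h.1⟩ else 0) m := by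
      apply xrec_congr
      intro i h1 h2
      have h3 : i - 1 < m := by omega
      have h4 : i - 1 < m + 1 := by omega
      have : (⟨i - 1, h4⟩ : Fin (m + 1)) = Fin.castSucc ⟨i - 1, h3⟩ := rfl
      simp only [hξ, h1, h3, h4, and_self, dite_true, this, Fin.snoc_castSucc]
    rw [this]
    exact eq_toL m _ (xrec_LB _ _) (xrec_nonneg _ _)
  have key : ∀ k, (xrec ξ (m + 1)).coeff k = (stepS m z (toL m (Phi m ζ))).coeff k := by
    intro k
    rw [xrec_succ, hz, hx]
  funext j
  change (xrec ξ (m + 1)).coeff (-((j : ℕ) : ℤ) - 1) = _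
  rw [key]
  refine Fin.lastCases ?_ (fun j => ?_) j
  · rw [Fin.snoc_last, stepS_low _ _ _ (toL_LB _ _) _ (by simp)]
    simp
  · rw [Fin.snoc_castSucc]
    rfl

/-- Triangular shears preserve Lebesgue measure. -/
lemma shear (m : ℕ) (g : Fin m → (Fin m → ℂ) → ℂ) (hg : ∀ j, Measurable (g j))
    (hd : ∀ j x y, (∀ i, j < i → x i = y i) → g j x = g j y) :
    MeasurePreserving (fun (x : Fin m → ℂ) j => x j + g j x) volume volume := by
  induction m with
  | zero =>
    convert MeasurePreserving.id (volume : Measure (Fin 0 → ℂ)) using 1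
  | succ m ih =>
    have ih' := ih (fun j x => g j.succ (Fin.cons 0 x))
      (fun j => (hg _).comp (measurable_pi_iff.2 fun i => by
        refine Fin.cases ?_ (fun i => ?_) i
        · simp
        · simpa using measurable_pi_apply i))
      (fun j x y h => hd _ _ _ fun i => by
        refine Fin.cases (fun hi => ?_) (fun i hi => ?_) i
        · exact absurd hi (by simp)
        · simpa using h i (by simpa using hi))
    have e := volume_preserving_piFinSuccAbove (fun _ : Fin (m + 1) => ℂ) 0
    have hs := ih'.skew_product (μc := (volume : Measure ℂ)) (μd := (volume : Measure ℂ))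
      (g := fun x t => t + g 0 (Fin.cons 0 x)) (by
        have : Measurable fun x : Fin m → ℂ => g 0 (Fin.cons 0 x) :=
          (hg _).comp (measurable_pi_iff.2 fun i => by
            refine Fin.cases ?_ (fun i => ?_) i
            · simp
            · simpa using measurable_pi_apply i)
        exact measurable_snd.add (this.comp measurable_fst))
      (ae_of_all _ fun a => map_add_right_eq_self _ _)
    have tot := (e.symm).comp ((Measure.measurePreserving_swap).comp
      (hs.comp (Measure.measurePreserving_swap.comp e)))
    refine (congrArg (fun F => MeasurePreserving F volume volume) ?_).mp tot
    symm
    funext x j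
    have hc : ∀ j, g j (Fin.cons 0 (fun i : Fin m => x i.succ)) = g j x := by
      intro j
      apply hd
      intro i
      refine Fin.cases (fun hi => ?_) (fun i hi => ?_) i
      · exact absurd hi (by simp)
      · simp
    refine Fin.cases ?_ (fun j => ?_) j
    · simp [MeasurableEquiv.piFinSuccAbove, Fin.insertNthEquiv, Fin.tail_def, hc]
    · simp [MeasurableEquiv.piFinSuccAbove, Fin.insertNthEquiv, Fin.tail_def, hc]

lemma stepT_shear (m : ℕ) (z : ℂ) (N : ℝ) (hN : N = 1 + ‖z‖ ^ 2) :
    MeasurePreserving (fun (x : Fin m → ℂ) j => x j + ((N : ℂ)⁻¹ * stepT m z x j - x j))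
      volume volume := by
  have hN0 : 0 < N := by rw [hN]; positivity
  have hNC : (N : ℂ) ≠ 0 := by exact_mod_cast hN0.ne'
  have hT : Measurable (stepT m z) :=
    stepT_measurable_right m z
  refine shear m (fun j x => (N : ℂ)⁻¹ * stepT m z x j - x j) ?_ ?_
  · intro j
    have h1 : Measurable fun x => stepT m z x j := (measurable_pi_apply j).comp hT
    exact (h1.const_mul _).sub (measurable_pi_apply j)
  · intro j x y h
    have := stepS_sub m z (toL m x) (toL m y) (toL_LB _ _) (toL_LB _ _) j j.2 (by
      intro k hk
      rw [HahnSeries.coeff_sub, toL_coeff, toL_coeff, ← Finset.sum_sub_distrib]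
      apply Finset.sum_eq_zero
      intro i _
      split_ifs with hi
      · rw [h i (by rw [Fin.lt_def]; omega), sub_self]
      · simp)
    rw [toL_coeff_fin, toL_coeff_fin, ← hN] at this
    simp only [stepT]
    have h2 : (N : ℂ)⁻¹ * (stepS m z (toL m x)).coeff (-((j : ℕ) : ℤ) - 1)
      - (N : ℂ)⁻¹ * (stepS m z (toL m y)).coeff (-((j : ℕ) : ℤ) - 1) = x j - y j := by
      rw [← mul_sub, this, inv_mul_cancel_left₀ hNC]
    linear_combination h2

lemma smul_lintegral (m : ℕ) (N : ℝ) (hN0 : 0 < N) (f : (Fin m → ℂ) → ENNReal)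
    (hf : Measurable f) :
    ENNReal.ofReal (N ^ (2 * m)) * ∫⁻ x : Fin m → ℂ, f (N • x) = ∫⁻ x, f x := by
  have h := Measure.map_addHaar_smul (volume : Measure (Fin m → ℂ)) hN0.ne'
  have hr : Module.finrank ℝ (Fin m → ℂ) = 2 * m := by
    rw [Module.finrank_pi_fintype]
    simp [Complex.finrank_real_complex, mul_comm]
  rw [hr] at h
  have h2 : ∫⁻ x : Fin m → ℂ, f (N • x)
      = ENNReal.ofReal (abs (N ^ (2 * m))⁻¹) * ∫⁻ x, f x := by
    have h3 := lintegral_map (μ := (volume : Measure (Fin m → ℂ))) hf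
      (measurable_const_smul (α := Fin m → ℂ) N)
    rw [h, lintegral_smul_measure] at h3
    exact h3.symm
  rw [h2, ← mul_assoc, ← ENNReal.ofReal_mul (by positivity), abs_of_pos (by positivity),
    mul_inv_cancel₀ (by positivity), ENNReal.ofReal_one, one_mul]

lemma stepT_lintegral (m : ℕ) (z : ℂ) (f : (Fin m → ℂ) → ENNReal) (hf : Measurable f) :
    ENNReal.ofReal ((1 + ‖z‖ ^ 2) ^ (2 * m)) * ∫⁻ x, f (stepT m z x) = ∫⁻ x, f x := by
  obtain ⟨N, hN⟩ : ∃ N : ℝ, N = 1 + ‖z‖ ^ 2 := ⟨_, rfl⟩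
  have hN0 : 0 < N := by rw [hN]; positivity
  have hNC : (N : ℂ) ≠ 0 := by exact_mod_cast hN0.ne'
  have hS := stepT_shear m z N hN
  rw [← hN, ← smul_lintegral m N hN0 f hf]
  congr 1
  have h1 := hS.lintegral_comp (f := fun x => f (N • x)) (hf.comp (measurable_const_smul N))
  rw [← h1]
  refine lintegral_congr fun x => congrArg f ?_
  funext j
  simp [hNC]

lemma lintegral_snoc (m : ℕ) (f : (Fin (m + 1) → ℂ) → ENNReal) (hf : Measurable f) :
    ∫⁻ x, f x = ∫⁻ z : ℂ, ∫⁻ x : Fin m → ℂ, f (Fin.snoc (α := fun _ => ℂ) x z) := by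
  have e := (volume_preserving_piFinSuccAbove (fun _ : Fin (m + 1) => ℂ) (Fin.last m)).symm
  rw [← e.lintegral_comp hf]
  have h := lintegral_prod (μ := (volume : Measure ℂ)) (ν := (volume : Measure (Fin m → ℂ))) _
    (hf.comp e.measurable).aemeasurable
  refine h.trans ?_
  refine lintegral_congr fun z => lintegral_congr fun x => ?_
  exact congrArg f (Fin.insertNth_last' z x)

lemma measurable_snoc (m : ℕ) :
    Measurable fun p : ℂ × (Fin m → ℂ) => (Fin.snoc (α := fun _ => ℂ) p.2 p.1 : Fin (m + 1) → ℂ) := by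
  refine measurable_pi_iff.2 fun i => ?_
  refine Fin.lastCases ?_ (fun j => ?_) i
  · simpa using measurable_fst
  · simp only [Fin.snoc_castSucc]
    exact (measurable_pi_apply j).comp measurable_snd

lemma phi_measurable (n : ℕ) : Measurable (Phi n) := by
  induction n with
  | zero => exact measurable_pi_iff.2 fun j => j.elim0
  | succ m ih =>
    have : Phi (m + 1) = fun ζ : Fin (m + 1) → ℂ => Fin.snoc (α := fun _ => ℂ)
        (stepT m (ζ (Fin.last m)) (Phi m (fun i => ζ i.castSucc))) (ζ (Fin.last m)) := by
      funext ζ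
      rw [← phi_snoc]
      congr 1
      exact (Fin.snoc_init_self (α := fun _ => ℂ) ζ).symm
    rw [this]
    have h1 : Measurable fun ζ : Fin (m + 1) → ℂ => Phi m (fun i => ζ i.castSucc) :=
      ih.comp (measurable_pi_iff.2 fun i => measurable_pi_apply _)
    have h2 : Measurable fun ζ : Fin (m + 1) → ℂ => ζ (Fin.last m) := measurable_pi_apply _
    exact (measurable_snoc m).comp (h2.prodMk ((stepT_measurable m).comp (h2.prodMk h1)))

lemma main_lintegral (n : ℕ) (f : (Fin n → ℂ) → ENNReal) (hf : Measurable f) :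
    (∫⁻ x, f x)
          = ∫⁻ ζ : Fin n → ℂ,
              f (Phi n ζ) *
                ∏ j : Fin n, ENNReal.ofReal ((1 + ‖ζ j‖ ^ 2) ^ (2 * (j : ℕ))) := by
  induction n with
  | zero =>
    refine lintegral_congr fun x => ?_
    simp [Subsingleton.elim (Phi 0 x) x]
  | succ m ih =>
    have hP := phi_measurable (m + 1)
    rw [lintegral_snoc m f hf, lintegral_snoc m _ (by
      refine (hf.comp hP).mul (Finset.measurable_fun_prod _ fun i _ => by fun_prop))]
    refine lintegral_congr fun z => ?_
    have hz : Measurable fun x : Fin m → ℂ => f (Fin.snoc (α := fun _ => ℂ) x z) :=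
      hf.comp ((measurable_snoc m).comp (measurable_const.prodMk measurable_id))
    have hT : Measurable (stepT m z) :=
      stepT_measurable_right m z
    have h1 := stepT_lintegral m z _ hz
    have h2 := ih (fun x => f (Fin.snoc (α := fun _ => ℂ) (stepT m z x) z)) (hz.comp hT)
    rw [h2] at h1
    rw [← h1, ← lintegral_const_mul' _ _ ENNReal.ofReal_ne_top]
    refine lintegral_congr fun ζ => ?_
    rw [phi_snoc, Fin.prod_univ_castSucc]
    simp only [Fin.snoc_castSucc, Fin.snoc_last, Fin.val_castSucc, Fin.val_last]
    ring

/-- The pushforward under `Φ_n` of the measure with density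
`ζ ↦ ∏_{j=1}^n (1+|ζ_j|²)^{2(j-1)}` with respect to Lebesgue measure is Lebesgue measure;
equivalently, `∫ f dλ = ∫ f(Φ_n(ζ)) ∏_j (1+|ζ_j|²)^{2(j-1)} dλ(ζ)` for every nonnegative
measurable `f`. -/
theorem stmt14 (n : ℕ) (hn : 1 ≤ n) :
    (Measure.map (Phi n)
        (volume.withDensity (fun ζ : Fin n → ℂ =>
          ∏ j : Fin n, ENNReal.ofReal ((1 + ‖ζ j‖ ^ 2) ^ (2 * (j : ℕ)))))
      = volume)
    ∧ ∀ f : (Fin n → ℂ) → ENNReal, Measurable f →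
        (∫⁻ x, f x)
          = ∫⁻ ζ : Fin n → ℂ,
              f (Phi n ζ) *
                ∏ j : Fin n, ENNReal.ofReal ((1 + ‖ζ j‖ ^ 2) ^ (2 * (j : ℕ))) := by
  refine ⟨?_, fun f hf => main_lintegral n f hf⟩
  ext s hs
  rw [Measure.map_apply (phi_measurable n) hs, withDensity_apply _ (phi_measurable n hs)]
  have h := main_lintegral n (s.indicator 1) (measurable_one.indicator hs)
  rw [lintegral_indicator_one hs] at h
  rw [h, ← lintegral_indicator (phi_measurable n hs)]
  refine lintegral_congr fun ζ => ?_
  by_cases hζ : Phi n ζ ∈ s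
  · simp [Set.indicator, hζ]
  · simp [Set.indicator, hζ]
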